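/- There exist a constant c > 0 and a threshold m₀ such that the following holds for all m ≥ m₀. Let m' = ⌈m^{2/3}⌉ and let n' be a positive integer with n' ≤ 2·m^{1/3}. Then for every real s with 1 ≤ s < m^{1/6}, the random cuckoo graph with n' edges on parts of size m' satisfies Pr(ē(G) > s) ≤ m^{−c·s}. -/

import Mathlib

open Classical

/-- Adjacency: item `x` gives an edge from left vertex `h₀ x` to right vertex `h₁ x`. -/
def cuckooAdj (n m : ℕ) (h₀ h₁ : Fin n → Fin m) (a b : Fin m ⊕ Fin m) : Prop :=
  ∃ x : Fin n, a = Sum.inl (h₀ x) ∧ b = Sum.inr (h₁ x)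

/-- Connectivity in the cuckoo graph: equivalence generated by adjacency. -/
def cuckooConn (n m : ℕ) (h₀ h₁ : Fin n → Fin m) : (Fin m ⊕ Fin m) → (Fin m ⊕ Fin m) → Prop :=
  Relation.EqvGen (cuckooAdj n m h₀ h₁)

/-- `C(v)`: number of edges (items, with multiplicity) in the component of `v`. -/
noncomputable def cuckooC (n m : ℕ) (h₀ h₁ : Fin n → Fin m) (v : Fin m ⊕ Fin m) : ℕ :=
  Nat.card {x : Fin n // cuckooConn n m h₀ h₁ (Sum.inl (h₀ x)) v}

/-- `V(v)`: number of vertices in the component of `v`. -/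
noncomputable def cuckooV (n m : ℕ) (h₀ h₁ : Fin n → Fin m) (v : Fin m ⊕ Fin m) : ℕ :=
  Nat.card {u : Fin m ⊕ Fin m // cuckooConn n m h₀ h₁ u v}

/-- `B_v`: cyclotomic number of the component of `v`, `C(v) − V(v) + 1`. -/
noncomputable def cuckooB (n m : ℕ) (h₀ h₁ : Fin n → Fin m) (v : Fin m ⊕ Fin m) : ℕ :=
  cuckooC n m h₀ h₁ v + 1 - cuckooV n m h₀ h₁ v

/-- The sample space: a pair of hash functions chosen uniformly at random. -/
abbrev HashPair (n m : ℕ) := (Fin n → Fin m) × (Fin n → Fin m)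

/-- Probability of an event under uniformly random hash functions. -/
noncomputable def cuckooPr (n m : ℕ) (E : HashPair n m → Prop) : ℝ :=
  (Nat.card {ω : HashPair n m // E ω} : ℝ) / (Nat.card (HashPair n m) : ℝ)

/-- Expectation of a real random variable under uniformly random hash functions. -/
noncomputable def cuckooE (n m : ℕ) (f : HashPair n m → ℝ) : ℝ :=
  (∑ ω : HashPair n m, f ω) / (Nat.card (HashPair n m) : ℝ)

/-- `X_i`: number of vertices lying in components with exactly `i` edges. -/
noncomputable def cuckooX (n m : ℕ) (h₀ h₁ : Fin n → Fin m) (i : ℕ) : ℕ :=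
  Nat.card {v : Fin m ⊕ Fin m // cuckooC n m h₀ h₁ v = i}

/-- The setoid of connected components. -/
def cuckooSetoid (n m : ℕ) (h₀ h₁ : Fin n → Fin m) : Setoid (Fin m ⊕ Fin m) :=
  ⟨cuckooConn n m h₀ h₁, Relation.EqvGen.is_equivalence _⟩

/-- `ē(G) = ∑_H max(e(H),0)`, the total excess over all components
(`ℕ`-subtraction realizes the `max` with `0`). -/
noncomputable def cuckooEbar (n m : ℕ) (h₀ h₁ : Fin n → Fin m) : ℕ :=
  ∑ᶠ c : Quotient (cuckooSetoid n m h₀ h₁),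
    (Nat.card {x : Fin n // Quotient.mk (cuckooSetoid n m h₀ h₁) (Sum.inl (h₀ x)) = c}
      - Nat.card {u : Fin m ⊕ Fin m // Quotient.mk (cuckooSetoid n m h₀ h₁) u = c})

/-!
Insert the items in increasing order. An item one of whose endpoints is not yet occupied by a
smaller item brings a new vertex to its component, and distinct such items bring distinct vertices.
Hence `ē(G)` is at most the number of items both of whose endpoints are already occupied. If every
item of a fixed `k`-set is of this kind, then each of the two hash functions is determined by its
values off the set and, for each item in it, a smaller item with the same value; this has
probability at most `(n / m) ^ (2 * k)`. The union bound over the `k`-sets then gives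
`Pr(ē(G) ≥ k) ≤ (n³ / m²) ^ k`, and for the sizes at hand `n' ^ 3 / m' ^ 2 = O(m ^ (-1 / 3))`.
-/

section RepeatedItems

open Finset

variable {α β γ : Type*}

lemma eq_of_eqOn_compl_of_lt [Preorder α] [WellFoundedLT α] {S : Set α} {f g : α → β} (p : S → α)
    (hp : ∀ x, p x < x) (hf : ∀ x, f (p x) = f x) (hg : ∀ x, g (p x) = g x)
    (hfg : Set.EqOn f g Sᶜ) : f = g := by
  funext x
  induction x using WellFoundedLT.induction with
  | ind x ih =>
    by_cases hx : x ∈ S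
    · rw [← hf ⟨x, hx⟩, ← hg ⟨x, hx⟩, ih _ (hp ⟨x, hx⟩)]
    · exact hfg hx

variable [Fintype α]

/-- The items `x` whose value under `h` is already taken by a smaller item. -/
noncomputable def repeatedItems [Preorder α] (h : α → β) : Finset α :=
  {x | ∃ y < x, h y = h x}

lemma mem_repeatedItems [Preorder α] {h : α → β} {x : α} :
    x ∈ repeatedItems h ↔ ∃ y < x, h y = h x := by
  simp only [repeatedItems, mem_filter_univ]

lemma eq_of_notMem_repeatedItems [LinearOrder α] {h : α → β} {x y : α}
    (hx : x ∉ repeatedItems h) (hy : y ∉ repeatedItems h) (hxy : h x = h y) : x = y := by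
  by_contra hne
  rcases lt_or_gt_of_ne hne with hlt | hlt
  · exact hy (mem_repeatedItems.2 ⟨x, hlt, hxy⟩)
  · exact hx (mem_repeatedItems.2 ⟨y, hlt, hxy.symm⟩)

lemma card_subset_repeatedItems_mul_le [Preorder α] [DecidableEq α] [Fintype β] (S : Finset α) :
    #{h : α → β | S ⊆ repeatedItems h} * Fintype.card β ^ #S
      ≤ Fintype.card α ^ #S * Fintype.card β ^ Fintype.card α := by
  set T : Finset (α → β) := {h | S ⊆ repeatedItems h}
  have hrepeat (h : T) (x : S) : ∃ y < x.1, h.1 y = h.1 x :=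
    mem_repeatedItems.1 (((mem_filter_univ _).1 h.2) x.2)
  choose p hp_lt hp_eq using hrepeat
  -- `h` is determined by its values off `S` and the earlier items that `S` collides with.
  have hencode : Function.Injective fun h : T => ((fun x : {x // x ∉ S} => h.1 x), p h) := by
    intro f g hfg
    obtain ⟨hoff, hp⟩ := Prod.mk.inj hfg
    exact Subtype.ext <| eq_of_eqOn_compl_of_lt (S := S) (p f) (hp_lt f) (hp_eq f)
      (fun x => hp ▸ hp_eq g x) fun x hx => congrFun hoff ⟨x, hx⟩
  have hcard : #T ≤ Fintype.card β ^ (Fintype.card α - #S) * Fintype.card α ^ #S := by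
    simpa [Fintype.card_subtype_compl] using Fintype.card_le_of_injective _ hencode
  calc #T * Fintype.card β ^ #S
      ≤ Fintype.card β ^ (Fintype.card α - #S) * Fintype.card α ^ #S * Fintype.card β ^ #S := by
        gcongr
    _ = Fintype.card α ^ #S * Fintype.card β ^ Fintype.card α := by
        rw [mul_right_comm, ← pow_add, Nat.sub_add_cancel S.card_le_univ, mul_comm]

lemma card_le_card_repeatedItems_inter_mul_le [Preorder α] [DecidableEq α] [Fintype β] (k : ℕ) :
    #{ω : (α → β) × (α → β) | k ≤ #(repeatedItems ω.1 ∩ repeatedItems ω.2)}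
        * (Fintype.card β ^ k) ^ 2
      ≤ (Fintype.card α).choose k
        * (Fintype.card α ^ k * Fintype.card β ^ Fintype.card α) ^ 2 := by
  let T (S : Finset α) : Finset (α → β) := {h | S ⊆ repeatedItems h}
  have hcover : ({ω | k ≤ #(repeatedItems ω.1 ∩ repeatedItems ω.2)} :
      Finset ((α → β) × (α → β))) ⊆ (powersetCard k univ).biUnion fun S => T S ×ˢ T S := by
    intro ω hω
    obtain ⟨S, hS, hSk⟩ := exists_subset_card_eq (mem_filter.1 hω).2
    obtain ⟨hS₀, hS₁⟩ := subset_inter_iff.1 hS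
    exact mem_biUnion.2 ⟨S, mem_powersetCard_univ.2 hSk,
      mem_product.2 ⟨(mem_filter_univ _).2 hS₀, (mem_filter_univ _).2 hS₁⟩⟩
  calc #{ω : (α → β) × (α → β) | k ≤ #(repeatedItems ω.1 ∩ repeatedItems ω.2)}
        * (Fintype.card β ^ k) ^ 2
      ≤ (∑ S ∈ powersetCard k univ, #(T S ×ˢ T S)) * (Fintype.card β ^ k) ^ 2 := by
        gcongr
        exact (card_le_card hcover).trans card_biUnion_le
    _ = ∑ S ∈ powersetCard k univ, (#(T S) * Fintype.card β ^ k) ^ 2 := by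
        simp only [sum_mul, card_product, mul_pow, ← sq]
    _ ≤ ∑ _S ∈ powersetCard k (univ : Finset α),
          (Fintype.card α ^ k * Fintype.card β ^ Fintype.card α) ^ 2 := by
        refine sum_le_sum fun S hS => Nat.pow_le_pow_left ?_ 2
        rw [← mem_powersetCard_univ.1 hS]
        exact card_subset_repeatedItems_mul_le S
    _ = (Fintype.card α).choose k
          * (Fintype.card α ^ k * Fintype.card β ^ Fintype.card α) ^ 2 := by
        rw [sum_const, card_powersetCard, smul_eq_mul, card_univ]

/-- An endpoint of the edge `x` that no smaller edge uses, if there is one (with preference to the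
left endpoint); the right endpoint otherwise. -/
noncomputable def newVertex [Preorder α] (h₀ : α → β) (h₁ : α → γ) (x : α) : β ⊕ γ :=
  if x ∈ repeatedItems h₀ then .inr (h₁ x) else .inl (h₀ x)

lemma newVertex_injOn [LinearOrder α] (h₀ : α → β) (h₁ : α → γ) :
    Set.InjOn (newVertex h₀ h₁) {x | x ∉ repeatedItems h₀ ∩ repeatedItems h₁} := by
  intro x hx y hy hxy
  simp only [Set.mem_ofPred_eq, mem_inter, not_and] at hx hy
  unfold newVertex at hxy
  split_ifs at hxy with hx₀ hy₀ hy₀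
  · exact eq_of_notMem_repeatedItems (hx hx₀) (hy hy₀) (Sum.inr.inj hxy)
  · exact eq_of_notMem_repeatedItems hx₀ hy₀ (Sum.inl.inj hxy)

end RepeatedItems

section CuckooGraph

open Finset

variable {n m : ℕ} (h₀ h₁ : Fin n → Fin m)

lemma mk_newVertex (x : Fin n) :
    Quotient.mk (cuckooSetoid n m h₀ h₁) (newVertex h₀ h₁ x)
      = Quotient.mk (cuckooSetoid n m h₀ h₁) (Sum.inl (h₀ x)) := by
  unfold newVertex
  split_ifs
  · exact Quotient.sound (.symm _ _ (.rel _ _ ⟨x, rfl, rfl⟩))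
  · rfl

lemma component_excess_le_card_repeatedItems (c : Quotient (cuckooSetoid n m h₀ h₁)) :
    Nat.card {x : Fin n // Quotient.mk (cuckooSetoid n m h₀ h₁) (Sum.inl (h₀ x)) = c}
        - Nat.card {u : Fin m ⊕ Fin m // Quotient.mk (cuckooSetoid n m h₀ h₁) u = c}
      ≤ #{x ∈ repeatedItems h₀ ∩ repeatedItems h₁ |
          Quotient.mk (cuckooSetoid n m h₀ h₁) (Sum.inl (h₀ x)) = c} := by
  rw [Nat.card_eq_fintype_card, Nat.card_eq_fintype_card, Fintype.card_subtype,
    Fintype.card_subtype, Nat.sub_le_iff_le_add]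
  set R := repeatedItems h₀ ∩ repeatedItems h₁
  set items : Finset (Fin n) := {x | Quotient.mk (cuckooSetoid n m h₀ h₁) (Sum.inl (h₀ x)) = c}
  have hrepeated : #{x ∈ items | x ∈ R} =
      #{x ∈ R | Quotient.mk (cuckooSetoid n m h₀ h₁) (Sum.inl (h₀ x)) = c} := by
    congr 1
    ext x
    simp only [items, mem_filter, mem_univ, true_and, and_comm]
  have hnew : #{x ∈ items | x ∉ R} ≤ #{u | Quotient.mk (cuckooSetoid n m h₀ h₁) u = c} := by
    refine card_le_card_of_injOn (newVertex h₀ h₁) (fun x hx => ?_)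
      ((newVertex_injOn h₀ h₁).mono fun x hx => (mem_filter.1 hx).2)
    simpa [items, mk_newVertex] using (mem_filter.1 hx).1
  calc #items = #{x ∈ items | x ∈ R} + #{x ∈ items | x ∉ R} :=
        (card_filter_add_card_filter_not _).symm
    _ ≤ _ := add_le_add hrepeated.le hnew

lemma cuckooEbar_le_card_repeatedItems_inter :
    cuckooEbar n m h₀ h₁ ≤ #(repeatedItems h₀ ∩ repeatedItems h₁) := by
  rw [cuckooEbar, finsum_eq_sum_of_fintype,
    card_eq_sum_card_fiberwise (t := univ) fun x _ =>
      mem_univ (Quotient.mk (cuckooSetoid n m h₀ h₁) (Sum.inl (h₀ x)))]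
  exact sum_le_sum fun c _ => component_excess_le_card_repeatedItems h₀ h₁ c

lemma card_le_cuckooEbar_mul_le (n m k : ℕ) :
    Nat.card {ω : HashPair n m // k ≤ cuckooEbar n m ω.1 ω.2} * (m ^ k) ^ 2
      ≤ n ^ k * (n ^ k * m ^ n) ^ 2 := by
  rw [Nat.card_eq_fintype_card, Fintype.card_subtype]
  calc #{ω : HashPair n m | k ≤ cuckooEbar n m ω.1 ω.2} * (m ^ k) ^ 2
      ≤ #{ω : HashPair n m | k ≤ #(repeatedItems ω.1 ∩ repeatedItems ω.2)} * (m ^ k) ^ 2 := by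
        gcongr with ω
        exact cuckooEbar_le_card_repeatedItems_inter ω.1 ω.2
    _ ≤ n.choose k * (n ^ k * m ^ n) ^ 2 := by
        simpa only [Fintype.card_fin] using
          card_le_card_repeatedItems_inter_mul_le (α := Fin n) (β := Fin m) k
    _ ≤ n ^ k * (n ^ k * m ^ n) ^ 2 := by
        gcongr
        exact Nat.choose_le_pow n k

lemma cuckooPr_mono {E F : HashPair n m → Prop} (hEF : ∀ ω, E ω → F ω) :
    cuckooPr n m E ≤ cuckooPr n m F := by
  unfold cuckooPr
  gcongr
  exact Nat.card_le_card_of_injective _ (Subtype.impEmbedding E F hEF).injective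

lemma card_hashPair (n m : ℕ) : Nat.card (HashPair n m) = (m ^ n) ^ 2 := by
  simp [sq]

lemma cuckooPr_le_cuckooEbar_le_pow (n k : ℕ) (hm : 0 < m) :
    cuckooPr n m (fun ω => k ≤ cuckooEbar n m ω.1 ω.2) ≤ ((n : ℝ) ^ 3 / (m : ℝ) ^ 2) ^ k := by
  have hcount : (Nat.card {ω : HashPair n m // k ≤ cuckooEbar n m ω.1 ω.2} : ℝ)
      * ((m : ℝ) ^ k) ^ 2 ≤ (n : ℝ) ^ k * ((n : ℝ) ^ k * (m : ℝ) ^ n) ^ 2 :=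
    mod_cast card_le_cuckooEbar_mul_le n m k
  have : (0 : ℝ) < m := mod_cast hm
  rw [cuckooPr, card_hashPair, div_pow, div_le_div_iff₀ (by positivity) (by positivity)]
  push_cast
  calc _ = (Nat.card {ω : HashPair n m // k ≤ cuckooEbar n m ω.1 ω.2} : ℝ)
        * ((m : ℝ) ^ k) ^ 2 := by ring
    _ ≤ _ := hcount
    _ = _ := by ring

end CuckooGraph

lemma cube_div_sq_le_rpow_neg {x a b c K : ℝ} (hx : 0 < x) (ha₀ : 0 ≤ a)
    (ha : a ≤ K * x ^ ((1 : ℝ) / 3)) (hb : x ^ ((2 : ℝ) / 3) ≤ b)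
    (hK : K ^ 3 ≤ x ^ (1 / 3 - c)) : a ^ 3 / b ^ 2 ≤ x ^ (-c) := by
  have hcube : (x ^ ((1 : ℝ) / 3)) ^ 3 = x := by
    rw [← Real.rpow_mul_natCast hx.le]; norm_num
  have hsq : (x ^ ((2 : ℝ) / 3)) ^ 2 = x ^ ((4 : ℝ) / 3) := by
    rw [← Real.rpow_mul_natCast hx.le]; norm_num
  have hcube_nonneg : 0 ≤ (K * x ^ ((1 : ℝ) / 3)) ^ 3 := pow_nonneg (ha₀.trans ha) 3
  calc a ^ 3 / b ^ 2 ≤ (K * x ^ ((1 : ℝ) / 3)) ^ 3 / (x ^ ((2 : ℝ) / 3)) ^ 2 := by gcongr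
    _ = K ^ 3 * x / x ^ ((4 : ℝ) / 3) := by rw [mul_pow, hcube, hsq]
    _ ≤ x ^ (1 / 3 - c) * x / x ^ ((4 : ℝ) / 3) := by gcongr
    _ = x ^ (-c) := by
        rw [← Real.rpow_add_one hx.ne', ← Real.rpow_sub hx]
        congr 1
        ring

theorem inner_stash_bound_general {c : ℝ} (hc₀ : 0 ≤ c) (hc : c < 1 / 3) (K : ℝ) :
    ∀ᶠ m : ℕ in Filter.atTop, ∀ m' : ℕ, (m : ℝ) ^ ((2 : ℝ) / 3) ≤ m' →
      ∀ n' : ℕ, (n' : ℝ) ≤ K * (m : ℝ) ^ ((1 : ℝ) / 3) → ∀ s : ℝ,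
        cuckooPr n' m' (fun ω => s < (cuckooEbar n' m' ω.1 ω.2 : ℝ))
          ≤ (m : ℝ) ^ (-(c * s)) := by
  have hlarge : ∀ᶠ m : ℕ in Filter.atTop, K ^ 3 ≤ (m : ℝ) ^ (1 / 3 - c) :=
    ((tendsto_rpow_atTop (sub_pos.2 hc)).comp tendsto_natCast_atTop_atTop).eventually_ge_atTop _
  filter_upwards [hlarge, Filter.eventually_ge_atTop 1] with m hK hm m' hm' n' hn' s
  have hm_one : (1 : ℝ) ≤ m := mod_cast hm
  have hm_pos : (0 : ℝ) < m := by positivity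
  have hm'_pos : 0 < m' := mod_cast (Real.rpow_pos_of_pos hm_pos _).trans_le hm'
  calc cuckooPr n' m' (fun ω => s < (cuckooEbar n' m' ω.1 ω.2 : ℝ))
      ≤ cuckooPr n' m' (fun ω => ⌈s⌉₊ ≤ cuckooEbar n' m' ω.1 ω.2) :=
        cuckooPr_mono fun ω hω => Nat.ceil_le.2 hω.le
    _ ≤ ((n' : ℝ) ^ 3 / (m' : ℝ) ^ 2) ^ ⌈s⌉₊ := cuckooPr_le_cuckooEbar_le_pow n' ⌈s⌉₊ hm'_pos
    _ ≤ ((m : ℝ) ^ (-c)) ^ ⌈s⌉₊ := by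
        gcongr
        exact cube_div_sq_le_rpow_neg hm_pos n'.cast_nonneg hn' hm' hK
    _ = (m : ℝ) ^ (-(c * ⌈s⌉₊)) := by rw [← Real.rpow_mul_natCast hm_pos.le, neg_mul]
    _ ≤ (m : ℝ) ^ (-(c * s)) := by
        gcongr
        exact Nat.le_ceil s

/-- Stash-size bound for the sparse inner table: with `m' = ⌈m^{2/3}⌉` and
`n' ≤ 2·m^{1/3}`, for every real `1 ≤ s < m^{1/6}`, `Pr(ē(G) > s) ≤ m^{−c·s}`,
for a universal constant `c > 0` and all large enough `m`. -/
theorem inner_stash_bound :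
    ∃ c : ℝ, 0 < c ∧ ∃ m₀ : ℕ, ∀ m : ℕ, m₀ ≤ m →
      ∀ m' : ℕ, m' = ⌈(m : ℝ) ^ ((2 : ℝ) / 3)⌉₊ →
      ∀ n' : ℕ, 0 < n' → (n' : ℝ) ≤ 2 * (m : ℝ) ^ ((1 : ℝ) / 3) →
      ∀ s : ℝ, 1 ≤ s → s < (m : ℝ) ^ ((1 : ℝ) / 6) →
        cuckooPr n' m' (fun ω => s < (cuckooEbar n' m' ω.1 ω.2 : ℝ))
          ≤ (m : ℝ) ^ (-(c * s)) := by
  obtain ⟨m₀, hm₀⟩ := Filter.eventually_atTop.1 <|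
    inner_stash_bound_general (c := 1 / 6) (by norm_num) (by norm_num) 2
  exact ⟨1 / 6, by norm_num, m₀, fun m hm m' hm' n' _ hn' s _ _ =>
    hm₀ m hm m' (hm' ▸ Nat.le_ceil _) n' hn' s⟩
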